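/- arXiv:2409.14994 — 2 statements merged into one kernel-verified Lean document; each statement's English description precedes it below -/
import Mathlib

section
/- Boundedness of the resolvent of the Schrödinger operator with exponential potential: let m ∈ ℂ ∖ ℤ with Re(m) > 0 and k ∈ ℂ with Re(k) > 0. Define the kernel R(x,y) := I_m(k·e^{min(x,y)})·K_m(k·e^{max(x,y)}) for x, y ∈ ℝ. Then there exists C ≥ 0 such that for all square-integrable f, g : ℝ → ℂ one has ∫_ℝ ∫_ℝ |f(x)|·|R(x,y)|·|g(y)| dx dy ≤ C·‖f‖_{L²}·‖g‖_{L²}. -/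
open Complex Set MeasureTheory

/-- Olver-normalized hypergeometric function `₀𝐅₁(c; w) = ∑ wⁿ/(n! Γ(c+n))`. -/
noncomputable def zeroF1reg (c w : ℂ) : ℂ :=
  ∑' n : ℕ, w ^ n / ((n.factorial : ℂ) * Complex.Gamma (c + n))

/-- Modified Bessel function `I_m(z) = (z/2)^m ₀𝐅₁(m+1; z²/4)` (principal branch). -/
noncomputable def besselI2d (m z : ℂ) : ℂ :=
  (z / 2) ^ m * zeroF1reg (m + 1) (z ^ 2 / 4)

/-- Macdonald function `K_m(z) = (π/(2 sin(π m))) (I_{-m}(z) - I_m(z))` for `m ∉ ℤ`. -/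
noncomputable def besselK2d (m z : ℂ) : ℂ :=
  (Real.pi : ℂ) / (2 * Complex.sin (Real.pi * m)) * (besselI2d (-m) z - besselI2d m z)

/-!
Both Bessel functions are controlled by integral representations. Poisson's integral over `(0, 1)`
gives `|I_m(kr)| ≤ C min(r, 1)^{Re m} e^{r Re k}`. Expanding `e^{-a/u}` in the integral of
`u^{ν-1} e^{-a(u+1/u)}` over `(1, ∞)` and integrating term by term, one recovers `I_{-ν}(2a)` up to
the factor `π / sin(πν)` and up to a double series with denominators `n + ν - j`. This series is
odd in `ν`, so it drops out of `K_m`, which is therefore the half sum of these integrals for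
`ν = ±m`, and `|K_m(kr)| ≤ C min(r, 1)^{-Re m} e^{-r Re k}`. In the variables `log r` the kernel is
thus at most `C e^{-a|x-y|}`, and Young's convolution inequality applies.
-/

open Filter Topology
open scoped ENNReal

section Integration

variable {α : Type*} [MeasurableSpace α] {μ : Measure α}

theorem hasSum_mul_integral_of_norm_le_one {ι 𝕜 : Type*} [Countable ι] [RCLike 𝕜] {c : ι → 𝕜}
    {g : ι → α → 𝕜} {φ G : α → 𝕜} (hc : Summable fun n ↦ ‖c n‖)
    (hg_meas : ∀ n, AEStronglyMeasurable (g n) μ) (hg_le : ∀ n, ∀ᵐ u ∂μ, ‖g n u‖ ≤ 1)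
    (hφ : Integrable φ μ) (hG : ∀ᵐ u ∂μ, HasSum (fun n ↦ c n * g n u) (G u)) :
    HasSum (fun n ↦ c n * ∫ u, g n u * φ u ∂μ) (∫ u, G u * φ u ∂μ) := by
  simp_rw [← integral_const_mul, ← mul_assoc]
  refine hasSum_integral_of_dominated_convergence (fun n u ↦ ‖c n‖ * ‖φ u‖)
    (fun n ↦ ((hg_meas n).const_mul _).mul hφ.aestronglyMeasurable) (fun n ↦ ?_)
    (ae_of_all _ fun u ↦ hc.mul_right _) ?_ (hG.mono fun u hu ↦ hu.mul_right _)
  · filter_upwards [hg_le n] with u hu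
    rw [norm_mul, norm_mul]
    gcongr
    exact mul_le_of_le_one_right (norm_nonneg _) hu
  · simp_rw [tsum_mul_right]
    exact hφ.norm.const_mul _

variable {E F : Type*} [NormedAddCommGroup E] [NormedAddCommGroup F]

theorem lintegral_enorm_mul_enorm_le_eLpNorm_mul_eLpNorm {p q : ℝ≥0∞}
    [p.HolderConjugate q] {f : α → E} {g : α → F} (hf : AEStronglyMeasurable f μ)
    (hg : AEStronglyMeasurable g μ) :
    ∫⁻ x, ‖f x‖ₑ * ‖g x‖ₑ ∂μ ≤ eLpNorm f p μ * eLpNorm g q μ := by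
  have h := eLpNorm_smul_le_mul_eLpNorm (p := p) (q := q) (r := 1) hg.norm hf.norm
  simpa [eLpNorm_one_eq_lintegral_enorm, enorm_mul, eLpNorm_norm] using h

end Integration

section Young

variable {G : Type*} [AddCommGroup G] [MeasurableSpace G] [MeasurableAdd₂ G] [MeasurableNeg G]
  {μ : Measure G} [SFinite μ] [μ.IsAddLeftInvariant] [μ.IsNegInvariant]
  {E F : Type*} [NormedAddCommGroup E] [NormedAddCommGroup F]
  {p q : ℝ≥0∞} [p.HolderConjugate q] {f : G → E} {g : G → F}

theorem lintegral_lintegral_enorm_mul_sub_mul_enorm_le {h : G → ℝ≥0∞}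
    (hf : AEStronglyMeasurable f μ) (hg : AEStronglyMeasurable g μ) (hh : AEMeasurable h μ) :
    ∫⁻ x, ∫⁻ y, ‖f x‖ₑ * h (x - y) * ‖g y‖ₑ ∂μ ∂μ ≤
      (∫⁻ t, h t ∂μ) * (eLpNorm f p μ * eLpNorm g q μ) := by
  have translate (x : G) : ∫⁻ y, ‖f x‖ₑ * h (x - y) * ‖g y‖ₑ ∂μ =
      ∫⁻ t, ‖f x‖ₑ * h t * ‖g (x - t)‖ₑ ∂μ := by
    simpa using (lintegral_sub_left_eq_self (fun y ↦ ‖f x‖ₑ * h (x - y) * ‖g y‖ₑ) x).symm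
  have hmeas : AEMeasurable (fun z : G × G ↦ ‖f z.1‖ₑ * h z.2 * ‖g (z.1 - z.2)‖ₑ) (μ.prod μ) :=
    (hf.enorm.comp_fst.mul hh.comp_snd).mul
      (hg.enorm.comp_quasiMeasurePreserving (quasiMeasurePreserving_sub_of_right_invariant μ μ))
  have holder (t : G) : ∫⁻ x, ‖f x‖ₑ * ‖g (x - t)‖ₑ ∂μ ≤ eLpNorm f p μ * eLpNorm g q μ := by
    have hpres := measurePreserving_sub_right μ t
    rw [← eLpNorm_comp_measurePreserving (p := q) hg hpres]
    exact lintegral_enorm_mul_enorm_le_eLpNorm_mul_eLpNorm hf (hg.comp_measurePreserving hpres)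
  calc ∫⁻ x, ∫⁻ y, ‖f x‖ₑ * h (x - y) * ‖g y‖ₑ ∂μ ∂μ
      = ∫⁻ t, ∫⁻ x, ‖f x‖ₑ * h t * ‖g (x - t)‖ₑ ∂μ ∂μ := by
        simp_rw [translate]
        exact lintegral_lintegral_swap hmeas
    _ = ∫⁻ t, h t * ∫⁻ x, ‖f x‖ₑ * ‖g (x - t)‖ₑ ∂μ ∂μ := by
        refine lintegral_congr fun t ↦ ?_
        simp_rw [mul_right_comm _ (h t), mul_comm _ (h t)]
        refine lintegral_const_mul'' _ (hf.enorm.mul ?_)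
        exact (hg.comp_measurePreserving (measurePreserving_sub_right μ t)).enorm
    _ ≤ ∫⁻ t, h t * (eLpNorm f p μ * eLpNorm g q μ) ∂μ := by
        gcongr with t
        exact holder t
    _ = (∫⁻ t, h t ∂μ) * (eLpNorm f p μ * eLpNorm g q μ) := lintegral_mul_const'' _ hh

theorem integral_integral_norm_mul_norm_mul_norm_le {K : Type*} [NormedAddCommGroup K]
    {R : G → G → K} {h : G → ℝ} (hR : ∀ x y, ‖R x y‖ ≤ h (x - y)) (hh : Integrable h μ)
    (hf : MemLp f p μ) (hg : MemLp g q μ) :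
    ∫ x, ∫ y, ‖f x‖ * ‖R x y‖ * ‖g y‖ ∂μ ∂μ ≤
      (∫ t, h t ∂μ) * (eLpNorm f p μ).toReal * (eLpNorm g q μ).toReal := by
  have hh_nonneg (t : G) : 0 ≤ h t := by simpa using (norm_nonneg _).trans (hR t 0)
  have hbound : ‖∫ x, ∫ y, ‖f x‖ * ‖R x y‖ * ‖g y‖ ∂μ ∂μ‖ₑ ≤
      (∫⁻ t, ‖h t‖ₑ ∂μ) * (eLpNorm f p μ * eLpNorm g q μ) := by
    refine (enorm_integral_le_lintegral_enorm _).trans <| (lintegral_mono fun x ↦ ?_).trans <|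
      lintegral_lintegral_enorm_mul_sub_mul_enorm_le hf.1 hg.1 hh.1.enorm
    refine (enorm_integral_le_lintegral_enorm _).trans (lintegral_mono fun y ↦ ?_)
    simp only [enorm_mul, enorm_norm]
    gcongr
    exact enorm_le_iff_norm_le.2 ((hR x y).trans (le_abs_self _))
  have hfin : (∫⁻ t, ‖h t‖ₑ ∂μ) * (eLpNorm f p μ * eLpNorm g q μ) ≠ ∞ :=
    ENNReal.mul_ne_top hh.2.ne (ENNReal.mul_ne_top hf.2.ne hg.2.ne)
  have hreal := ENNReal.toReal_mono hfin hbound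
  rw [toReal_enorm, ENNReal.toReal_mul, ENNReal.toReal_mul, ← mul_assoc,
    ← integral_norm_eq_lintegral_enorm hh.1] at hreal
  simp_rw [Real.norm_of_nonneg (hh_nonneg _)] at hreal
  exact (Real.le_norm_self _).trans hreal

end Young

section GammaIntegral

theorem integrableOn_rpow_mul_exp_neg_mul_Ioi_zero {s b : ℝ} (hs : -1 < s) (hb : 0 < b) :
    IntegrableOn (fun u : ℝ ↦ u ^ s * Real.exp (-b * u)) (Ioi 0) := by
  simpa only [Real.rpow_one] using integrableOn_rpow_mul_exp_neg_mul_rpow hs one_pos hb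

theorem integrableOn_rpow_mul_exp_neg_mul_Ioi (s : ℝ) {b c : ℝ} (hb : 0 < b) (hc : 0 < c) :
    IntegrableOn (fun u : ℝ ↦ u ^ s * Real.exp (-b * u)) (Ioi c) := by
  have hcont : ContinuousOn (fun u : ℝ ↦ u ^ s * Real.exp (-b * u)) (Ici c) :=
    (continuousOn_id.rpow_const fun u hu ↦ Or.inl (hc.trans_le hu).ne').mul (by fun_prop)
  refine integrable_of_isBigO_exp_neg (half_pos hb) hcont ?_
  refine ((isLittleO_rpow_exp_pos_mul_atTop s (half_pos hb)).isBigO.mul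
    (Asymptotics.isBigO_refl _ _)).congr_right fun u ↦ ?_
  rw [← Real.exp_add]
  ring_nf

theorem norm_cpow_mul_exp_neg_mul (ν a : ℂ) {u : ℝ} (hu : 0 < u) :
    ‖(u : ℂ) ^ ν * cexp (-a * u)‖ = u ^ ν.re * Real.exp (-a.re * u) := by
  rw [norm_mul, norm_cpow_eq_rpow_re_of_pos hu, norm_exp, re_mul_ofReal, neg_re]

theorem integrableOn_cpow_mul_exp_neg_mul_of_rpow {ν a : ℂ} {S : Set ℝ} (hS : MeasurableSet S)
    (hS_pos : S ⊆ Ioi 0) (h : IntegrableOn (fun u : ℝ ↦ u ^ ν.re * Real.exp (-a.re * u)) S) :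
    IntegrableOn (fun u : ℝ ↦ (u : ℂ) ^ ν * cexp (-a * u)) S := by
  refine h.mono' (by fun_prop) ?_
  filter_upwards [self_mem_ae_restrict hS] with u hu
  exact (norm_cpow_mul_exp_neg_mul ν a (hS_pos hu)).le

theorem integrableOn_cpow_mul_exp_neg_mul_Ioi_zero {ν a : ℂ} (hν : -1 < ν.re) (ha : 0 < a.re) :
    IntegrableOn (fun u : ℝ ↦ (u : ℂ) ^ ν * cexp (-a * u)) (Ioi 0) :=
  integrableOn_cpow_mul_exp_neg_mul_of_rpow measurableSet_Ioi subset_rfl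
    (integrableOn_rpow_mul_exp_neg_mul_Ioi_zero hν ha)

theorem integrableOn_cpow_mul_exp_neg_mul_Ioi (ν : ℂ) {a : ℂ} {c : ℝ} (ha : 0 < a.re)
    (hc : 0 < c) : IntegrableOn (fun u : ℝ ↦ (u : ℂ) ^ ν * cexp (-a * u)) (Ioi c) :=
  integrableOn_cpow_mul_exp_neg_mul_of_rpow measurableSet_Ioi (Ioi_subset_Ioi hc.le)
    (integrableOn_rpow_mul_exp_neg_mul_Ioi _ ha hc)

theorem differentiableAt_integral_cpow_mul_exp_neg_mul_Ioi {ν a : ℂ} (hν : 0 < ν.re)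
    (ha : 0 < a.re) : DifferentiableAt ℂ
      (fun a : ℂ ↦ ∫ u in Ioi (0 : ℝ), (u : ℂ) ^ (ν - 1) * cexp (-a * u)) a := by
  have re_ge {b : ℂ} (hb : b ∈ Metric.ball a (a.re / 2)) : a.re / 2 ≤ b.re := by
    have hnorm : ‖b - a‖ < a.re / 2 := mem_ball_iff_norm.1 hb
    have hre := (abs_le.1 (abs_re_le_norm (b - a))).1
    rw [sub_re] at hre
    linarith
  refine (hasDerivAt_integral_of_dominated_loc_of_deriv_le
    (F := fun (b : ℂ) (u : ℝ) ↦ (u : ℂ) ^ (ν - 1) * cexp (-b * u))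
    (F' := fun (b : ℂ) (u : ℝ) ↦ (u : ℂ) ^ (ν - 1) * (cexp (-b * u) * (-u)))
    (bound := fun u ↦ u ^ ν.re * Real.exp (-(a.re / 2) * u))
    (Metric.ball_mem_nhds a (half_pos ha)) (Eventually.of_forall fun b ↦ by fun_prop)
    (integrableOn_cpow_mul_exp_neg_mul_Ioi_zero (by simpa using hν) ha) (by fun_prop)
    ?_ (integrableOn_rpow_mul_exp_neg_mul_Ioi_zero (by linarith) (half_pos ha))
    (Eventually.of_forall fun u b _ ↦ ?_)).2.differentiableAt
  · filter_upwards [self_mem_ae_restrict measurableSet_Ioi] with u hu b hb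
    replace hu : 0 < u := hu
    have hb_re := re_ge hb
    calc ‖(u : ℂ) ^ (ν - 1) * (cexp (-b * u) * (-u))‖
        = u ^ (ν.re - 1) * Real.exp (-b.re * u) * u := by
          rw [← mul_assoc, norm_mul, norm_cpow_mul_exp_neg_mul _ _ hu, norm_neg,
            norm_real, Real.norm_of_nonneg hu.le, sub_re, one_re]
      _ = u ^ ν.re * Real.exp (-b.re * u) := by
          rw [mul_right_comm, ← Real.rpow_add_one hu.ne', sub_add_cancel]
      _ ≤ u ^ ν.re * Real.exp (-(a.re / 2) * u) := by gcongr
  · have hlin : HasDerivAt (fun b : ℂ ↦ -b * u) (-u) b := by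
      simpa using (hasDerivAt_id b).neg.mul_const (u : ℂ)
    exact hlin.cexp.const_mul _

theorem integral_cpow_mul_exp_neg_mul_Ioi_of_re_pos {ν a : ℂ} (hν : 0 < ν.re) (ha : 0 < a.re) :
    ∫ u in Ioi (0 : ℝ), (u : ℂ) ^ (ν - 1) * cexp (-a * u) = a ^ (-ν) * Gamma ν := by
  have hopen : IsOpen {z : ℂ | 0 < z.re} := isOpen_lt continuous_const continuous_re
  have hintegral : AnalyticOnNhd ℂ
      (fun a : ℂ ↦ ∫ u in Ioi (0 : ℝ), (u : ℂ) ^ (ν - 1) * cexp (-a * u)) {z | 0 < z.re} :=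
    DifferentiableOn.analyticOnNhd (fun z hz ↦
      (differentiableAt_integral_cpow_mul_exp_neg_mul_Ioi hν hz).differentiableWithinAt) hopen
  have hpower : AnalyticOnNhd ℂ (fun a : ℂ ↦ a ^ (-ν) * Gamma ν) {z | 0 < z.re} :=
    DifferentiableOn.analyticOnNhd (fun z hz ↦ ((differentiableAt_id.cpow_const
      (Or.inl hz)).mul_const _).differentiableWithinAt) hopen
  have hreal (r : ℝ) (hr : 0 < r) :
      ∫ u in Ioi (0 : ℝ), (u : ℂ) ^ (ν - 1) * cexp (-(r : ℂ) * u) = (r : ℂ) ^ (-ν) * Gamma ν := by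
    have harg : (r : ℂ).arg ≠ Real.pi := by
      rw [arg_ofReal_of_nonneg hr.le]
      exact Real.pi_pos.ne
    simpa only [neg_mul, one_div, inv_cpow _ _ harg, ← cpow_neg] using
      integral_cpow_mul_exp_neg_mul_Ioi hν hr
  have htendsto : Tendsto ((↑) : ℝ → ℂ) (𝓝[≠] 1) (𝓝[≠] 1) :=
    tendsto_nhdsWithin_of_tendsto_nhds_of_eventually_within _
      ((continuous_ofReal.tendsto' 1 1 ofReal_one).mono_left nhdsWithin_le_nhds)
      (eventually_nhdsWithin_of_forall fun r hr ↦ by simpa using hr)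
  have hevent : ∀ᶠ r : ℝ in 𝓝[≠] 1, 0 < r :=
    nhdsWithin_le_nhds (lt_mem_nhds one_pos)
  exact hintegral.eqOn_of_preconnected_of_frequently_eq hpower
    (convex_halfSpace_re_gt 0).isPreconnected (z₀ := 1) (by simp)
    (htendsto.frequently (hevent.mono hreal).frequently) ha

end GammaIntegral

section UpperGammaIntegral

/-- The integral `∫₁^∞ u^{ν-1} e^{-au} du`, a rescaled upper incomplete Gamma function, entire
in `ν` for `Re a > 0`. -/
noncomputable def upperGammaIntegral (ν a : ℂ) : ℂ :=
  ∫ u in Ioi (1 : ℝ), (u : ℂ) ^ (ν - 1) * cexp (-a * u)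

theorem mul_upperGammaIntegral (ν : ℂ) {a : ℂ} (ha : 0 < a.re) :
    ν * upperGammaIntegral ν a = a * upperGammaIntegral (ν + 1) a - cexp (-a) := by
  have hint₀ := (integrableOn_cpow_mul_exp_neg_mul_Ioi (ν - 1) ha one_pos).const_mul ν
  have hint₁ := (integrableOn_cpow_mul_exp_neg_mul_Ioi ν ha one_pos).const_mul a
  have hcont : ContinuousAt (fun u : ℝ ↦ (u : ℂ) ^ ν * cexp (-a * u)) 1 :=
    (continuousAt_ofReal_cpow_const 1 ν (Or.inr one_ne_zero)).mul (by fun_prop)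
  have hderiv (u : ℝ) (hu : u ∈ Ioi 1) : HasDerivAt (fun u : ℝ ↦ (u : ℂ) ^ ν * cexp (-a * u))
      (ν * ((u : ℂ) ^ (ν - 1) * cexp (-a * u)) - a * ((u : ℂ) ^ ν * cexp (-a * u))) u := by
    have hslit : (u : ℂ) ∈ slitPlane := Or.inl (zero_lt_one.trans hu)
    have hpow := (hasDerivAt_id (u : ℂ)).cpow_const (c := ν) hslit
    have hexp := ((hasDerivAt_id (u : ℂ)).const_mul (-a)).cexp
    refine (hpow.mul hexp).comp_ofReal.congr_deriv ?_
    simp only [id_eq, mul_one]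
    ring
  have hlim : Tendsto (fun u : ℝ ↦ (u : ℂ) ^ ν * cexp (-a * u)) atTop (𝓝 0) := by
    rw [tendsto_zero_iff_norm_tendsto_zero]
    refine (tendsto_rpow_mul_exp_neg_mul_atTop_nhds_zero ν.re a.re ha).congr' ?_
    filter_upwards [eventually_gt_atTop 0] with u hu
    rw [norm_cpow_mul_exp_neg_mul ν a hu]
  have hparts := integral_Ioi_of_hasDerivAt_of_tendsto hcont.continuousWithinAt hderiv
    (hint₀.sub hint₁) hlim
  rw [integral_sub hint₀ hint₁, integral_const_mul, integral_const_mul, ofReal_one, one_cpow,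
    one_mul, mul_one, zero_sub] at hparts
  rw [upperGammaIntegral, upperGammaIntegral, add_sub_cancel_right]
  linear_combination hparts

theorem hasSum_pow_div_factorial (z : ℂ) :
    HasSum (fun n : ℕ ↦ z ^ n / (n.factorial : ℂ)) (cexp z) := by
  rw [exp_eq_exp_ℂ]
  exact NormedSpace.expSeries_div_hasSum_exp z

theorem hasSum_exp_div_add_of_re_pos {ν : ℂ} (a : ℂ) (hν : 0 < ν.re) :
    HasSum (fun n : ℕ ↦ (-a) ^ n / (n.factorial : ℂ) * (1 / (n + ν)))
      (∫ u in Ioc (0 : ℝ) 1, (u : ℂ) ^ (ν - 1) * cexp (-a * u)) := by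
  have hφ : IntegrableOn (fun u : ℝ ↦ (u : ℂ) ^ (ν - 1)) (Ioc 0 1) := by
    rw [← intervalIntegrable_iff_integrableOn_Ioc_of_le zero_le_one]
    exact intervalIntegral.intervalIntegrable_cpow' (by simpa using hν)
  have moment (n : ℕ) : ∫ u in Ioc (0 : ℝ) 1, (u : ℂ) ^ n * (u : ℂ) ^ (ν - 1) = 1 / (n + ν) := by
    have hre : 0 < (n + ν).re := by
      rw [add_re, natCast_re]
      positivity
    have hne : (n : ℂ) + ν ≠ 0 := fun h ↦ hre.ne' (by rw [h, zero_re])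
    calc ∫ u in Ioc (0 : ℝ) 1, (u : ℂ) ^ n * (u : ℂ) ^ (ν - 1)
        = ∫ u in (0 : ℝ)..1, (u : ℂ) ^ (n + ν - 1) := by
          rw [intervalIntegral.integral_of_le zero_le_one]
          refine setIntegral_congr_fun measurableSet_Ioc fun u hu ↦ ?_
          rw [add_sub_assoc, cpow_add _ _ (ofReal_ne_zero.2 hu.1.ne'), cpow_natCast]
      _ = 1 / (n + ν) := by
          rw [integral_cpow (Or.inl (by rw [sub_re, one_re]; linarith)), sub_add_cancel,
            ofReal_one, one_cpow, ofReal_zero, zero_cpow hne, sub_zero]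
  have hexp (u : ℝ) : HasSum (fun n : ℕ ↦ (-a) ^ n / (n.factorial : ℂ) * (u : ℂ) ^ n)
      (cexp (-a * u)) :=
    (hasSum_pow_div_factorial (-a * u)).congr_fun fun n ↦ by rw [mul_pow]; ring
  have hsum := hasSum_mul_integral_of_norm_le_one (μ := volume.restrict (Ioc (0 : ℝ) 1))
    (hasSum_pow_div_factorial (-a)).summable.norm (fun n ↦ by fun_prop) (fun n ↦ ?_) hφ
    (ae_of_all _ hexp)
  · simpa only [moment, mul_comm (cexp _)] using hsum
  · filter_upwards [self_mem_ae_restrict measurableSet_Ioc] with u hu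
    rw [norm_pow, norm_real, Real.norm_of_nonneg hu.1.le]
    exact pow_le_one₀ hu.1.le hu.2

theorem hasSum_exp_div_add_of_add_one {ν a S : ℂ} (hν : ∀ n : ℕ, ν ≠ -n)
    (h : HasSum (fun n : ℕ ↦ (-a) ^ n / (n.factorial : ℂ) * (1 / (n + (ν + 1)))) S) :
    HasSum (fun n : ℕ ↦ (-a) ^ n / (n.factorial : ℂ) * (1 / (n + ν)))
      ((cexp (-a) + a * S) / ν) := by
  have add_ne (n : ℕ) : (n : ℂ) + ν ≠ 0 := fun h ↦ hν n (by linear_combination h)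
  have hν₀ : ν ≠ 0 := by simpa using hν 0
  have factorial_ne (n : ℕ) : (n.factorial : ℂ) ≠ 0 := Nat.cast_ne_zero.2 n.factorial_ne_zero
  have hshift : HasSum (fun n : ℕ ↦ (n : ℂ) * ((-a) ^ n / (n.factorial : ℂ) * (1 / (n + ν))))
      (-a * S) := by
    rw [← hasSum_nat_add_iff' 1]
    simp only [Finset.range_one, Finset.sum_singleton, Nat.cast_zero, zero_mul, sub_zero]
    refine (h.mul_left (-a)).congr_fun fun n ↦ ?_
    have hn := add_ne (n + 1)
    have hf := factorial_ne n
    have hn₁ : (n : ℂ) + 1 ≠ 0 := n.cast_add_one_ne_zero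
    rw [Nat.factorial_succ]
    push_cast at hn ⊢
    rw [add_assoc, add_comm 1 ν] at hn ⊢
    field_simp
    ring
  rw [show (cexp (-a) + a * S) / ν = (cexp (-a) - -a * S) / ν by ring]
  refine (((hasSum_pow_div_factorial (-a)).sub hshift).div_const ν).congr_fun fun n ↦ ?_
  have hn := add_ne n
  have hf := factorial_ne n
  field_simp
  ring

theorem hasSum_exp_div_add {ν a : ℂ} (ha : 0 < a.re) (hν : ∀ n : ℕ, ν ≠ -n) :
    HasSum (fun n : ℕ ↦ (-a) ^ n / (n.factorial : ℂ) * (1 / (n + ν)))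
      (a ^ (-ν) * Gamma ν - upperGammaIntegral ν a) := by
  obtain ⟨N, hN⟩ := exists_nat_gt (-ν.re)
  induction N generalizing ν with
  | zero =>
    have hν_re : 0 < ν.re := by simpa using hN
    have hint := integrableOn_cpow_mul_exp_neg_mul_Ioi_zero (ν := ν - 1) (by simpa using hν_re) ha
    have hsplit := setIntegral_union (Ioc_disjoint_Ioi le_rfl) measurableSet_Ioi
      (hint.mono_set Ioc_subset_Ioi_self) (hint.mono_set (Ioi_subset_Ioi zero_le_one))
    rw [Ioc_union_Ioi_eq_Ioi zero_le_one, integral_cpow_mul_exp_neg_mul_Ioi_of_re_pos hν_re ha]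
      at hsplit
    rw [hsplit, upperGammaIntegral, add_sub_cancel_right]
    exact hasSum_exp_div_add_of_re_pos a hν_re
  | succ N ih =>
    have hν₀ : ν ≠ 0 := by simpa using hν 0
    have ha₀ : a ≠ 0 := by
      rintro rfl
      exact ha.ne rfl
    have hnext := ih (ν := ν + 1) (fun n h ↦ hν (n + 1) (by push_cast; linear_combination h))
      (by rw [add_re, one_re]; push_cast at hN; linarith)
    convert! hasSum_exp_div_add_of_add_one hν hnext using 1
    rw [eq_div_iff hν₀, Gamma_add_one _ hν₀, neg_add, cpow_add _ _ ha₀, cpow_neg_one]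
    field_simp
    linear_combination -mul_upperGammaIntegral ν ha

end UpperGammaIntegral

section Macdonald

/-- The integral `∫₁^∞ u^{ν-1} e^{-a(u+1/u)} du`, the part over `(1, ∞)` of the integral over
`(0, ∞)` that represents `2 K_ν(2a)`. -/
noncomputable def macdonaldHalfIntegral (ν a : ℂ) : ℂ :=
  ∫ u in Ioi (1 : ℝ), (u : ℂ) ^ (ν - 1) * cexp (-a * u) * cexp (-a / u)

theorem hasSum_upperGammaIntegral (ν : ℂ) {a : ℂ} (ha : 0 < a.re) :
    HasSum (fun j : ℕ ↦ (-a) ^ j / (j.factorial : ℂ) * upperGammaIntegral (ν - j) a)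
      (macdonaldHalfIntegral ν a) := by
  have hexp (u : ℝ) : HasSum (fun j : ℕ ↦ (-a) ^ j / (j.factorial : ℂ) * ((u : ℂ)⁻¹) ^ j)
      (cexp (-a / u)) :=
    (hasSum_pow_div_factorial (-a / u)).congr_fun fun j ↦ by
      rw [div_pow, inv_pow, div_mul_eq_mul_div, ← div_eq_mul_inv]
  have hsum := hasSum_mul_integral_of_norm_le_one (μ := volume.restrict (Ioi (1 : ℝ)))
    (hasSum_pow_div_factorial (-a)).summable.norm (fun j ↦ by fun_prop) (fun j ↦ ?_)
    (integrableOn_cpow_mul_exp_neg_mul_Ioi (ν - 1) ha one_pos) (ae_of_all _ hexp)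
  · have shift (j : ℕ) : ∫ u in Ioi (1 : ℝ), ((u : ℂ)⁻¹) ^ j * ((u : ℂ) ^ (ν - 1) * cexp (-a * u))
        = upperGammaIntegral (ν - j) a := by
      refine setIntegral_congr_fun measurableSet_Ioi fun u hu ↦ ?_
      have hu₀ : (u : ℂ) ≠ 0 := ofReal_ne_zero.2 (zero_lt_one.trans hu).ne'
      rw [sub_right_comm, cpow_sub (ν - 1) _ hu₀, cpow_natCast, inv_pow]
      ring
    simpa only [shift, mul_comm (cexp (-a / _)), macdonaldHalfIntegral] using hsum
  · filter_upwards [self_mem_ae_restrict measurableSet_Ioi] with u hu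
    rw [norm_pow, norm_inv, norm_real, Real.norm_of_nonneg (zero_le_one.trans hu.le)]
    exact pow_le_one₀ (inv_nonneg.2 (zero_le_one.trans hu.le)) (inv_le_one_of_one_le₀ hu.le)

theorem exists_forall_norm_one_div_add_intCast_le {ν : ℂ} (hν : ν ∈ integerComplement) :
    ∃ M : ℝ, ∀ n : ℤ, ‖1 / (n + ν)‖ ≤ M := by
  have hdist := (isClosed_range_intCast.notMem_iff_infDist_pos (range_nonempty _)).1 hν
  refine ⟨1 / Metric.infDist ν (range ((↑) : ℤ → ℂ)), fun n ↦ ?_⟩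
  rw [norm_div, norm_one]
  refine one_div_le_one_div_of_le hdist ?_
  have hle := Metric.infDist_le_dist_of_mem (x := ν) (mem_range_self (f := ((↑) : ℤ → ℂ)) (-n))
  rwa [dist_eq_norm, Int.cast_neg, sub_neg_eq_add, add_comm] at hle

/-- The terms of the double series obtained by expanding both exponentials in
`∫₀¹ u^{ν-1} e^{-a(u+1/u)} du` and integrating formally: each `∫₀¹ u^{n+ν-j-1} du` is replaced by
`1/(n+ν-j)`, with `p = (j, n)`. -/
noncomputable def poleTerm (ν a : ℂ) (p : ℕ × ℕ) : ℂ :=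
  (-a) ^ p.1 / (p.1.factorial : ℂ) * ((-a) ^ p.2 / (p.2.factorial : ℂ) * (1 / (p.2 + (ν - p.1))))

theorem summable_poleTerm {ν : ℂ} (hν : ν ∈ integerComplement) (a : ℂ) :
    Summable (poleTerm ν a) := by
  obtain ⟨M, hM⟩ := exists_forall_norm_one_div_add_intCast_le hν
  have hexp := (hasSum_pow_div_factorial (-a)).summable.norm
  refine Summable.of_norm_bounded ((hexp.mul_of_nonneg hexp (fun _ ↦ norm_nonneg _)
    (fun _ ↦ norm_nonneg _)).mul_right M) fun p ↦ ?_
  have hp : ‖1 / ((p.2 : ℂ) + (ν - p.1))‖ ≤ M := by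
    rw [add_sub_left_comm, add_comm]
    exact_mod_cast hM (p.2 - p.1)
  rw [poleTerm, ← mul_assoc, norm_mul, norm_mul]
  gcongr

theorem tsum_poleTerm_neg (ν a : ℂ) : ∑' p, poleTerm (-ν) a p = -∑' p, poleTerm ν a p := by
  rw [← (Equiv.prodComm ℕ ℕ).tsum_eq (poleTerm (-ν) a), ← tsum_neg]
  refine tsum_congr fun p ↦ ?_
  have hdenom : (p.1 : ℂ) + (-ν - p.2) = -(p.2 + (ν - p.1)) := by ring
  simp only [poleTerm, Equiv.prodComm_apply, Prod.fst_swap, Prod.snd_swap, hdenom,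
    one_div_neg_eq_neg_one_div]
  ring

theorem neg_one_pow_mul_Gamma_sub_natCast {ν : ℂ} (hν : ν ∈ integerComplement) (j : ℕ) :
    (-1) ^ j * Gamma (ν - j) = Real.pi / sin (Real.pi * ν) * (1 / Gamma (-ν + 1 + j)) := by
  have hsin : sin (Real.pi * (ν - j)) = (-1) ^ j * sin (Real.pi * ν) := by
    rw [mul_sub, mul_comm (Real.pi : ℂ) j, sin_antiperiodic.sub_nat_mul_eq]
  have hrefl := Gamma_mul_Gamma_one_sub (ν - j)
  rw [hsin, show 1 - (ν - j) = -ν + 1 + j by ring] at hrefl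
  have := sin_pi_mul_ne_zero hν
  have hΓ : Gamma (-ν + 1 + j) ≠ 0 := Gamma_ne_zero fun n hn ↦
    hν ⟨n + 1 + j, by push_cast; linear_combination hn⟩
  have hsign : (-1 : ℂ) ^ j ≠ 0 := pow_ne_zero j (neg_ne_zero.2 one_ne_zero)
  field_simp at hrefl ⊢
  linear_combination hrefl

theorem pi_div_sin_mul_besselI2d_neg {ν a : ℂ} (hν : ν ∈ integerComplement) (ha : 0 < a.re) :
    Real.pi / sin (Real.pi * ν) * besselI2d (-ν) (2 * a)
      = macdonaldHalfIntegral ν a + ∑' p, poleTerm ν a p := by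
  have ha₀ : a ≠ 0 := by
    rintro rfl
    exact ha.ne rfl
  have row_sum (j : ℕ) : HasSum (fun n : ℕ ↦ poleTerm ν a (j, n)) ((-a) ^ j / (j.factorial : ℂ) *
      (a ^ (-(ν - j)) * Gamma (ν - j) - upperGammaIntegral (ν - j) a)) := by
    have hne (n : ℕ) : ν - j ≠ -n := fun h ↦ hν ⟨j - n, by push_cast; linear_combination -h⟩
    simpa only [poleTerm] using (hasSum_exp_div_add ha hne).mul_left _
  have hsum := (hasSum_upperGammaIntegral ν ha).add
    ((summable_poleTerm hν a).hasSum.prod_fiberwise row_sum)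
  rw [← hsum.tsum_eq, besselI2d, zeroF1reg, ← mul_assoc, ← tsum_mul_left]
  refine tsum_congr fun j ↦ ?_
  have hpow : a ^ (-(ν - j)) = a ^ (-ν) * a ^ j := by
    rw [neg_sub, sub_eq_neg_add, cpow_add _ _ ha₀, cpow_natCast]
  rw [hpow, mul_div_cancel_left₀ a two_ne_zero, show (2 * a) ^ 2 / 4 = a * a by ring, mul_pow,
    neg_pow a j, ← div_div, div_eq_mul_one_div _ (Gamma _)]
  linear_combination (-(a ^ (-ν) * (a ^ j * a ^ j / (j.factorial : ℂ)))) *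
    neg_one_pow_mul_Gamma_sub_natCast hν j

theorem besselK2d_two_mul {ν a : ℂ} (hν : ν ∈ integerComplement) (ha : 0 < a.re) :
    besselK2d ν (2 * a) = (macdonaldHalfIntegral ν a + macdonaldHalfIntegral (-ν) a) / 2 := by
  have hν_neg : -ν ∈ integerComplement := fun ⟨n, hn⟩ ↦ hν ⟨-n, by rw [Int.cast_neg, hn, neg_neg]⟩
  have hpos := pi_div_sin_mul_besselI2d_neg hν ha
  have hneg := pi_div_sin_mul_besselI2d_neg hν_neg ha
  rw [neg_neg, mul_neg, sin_neg, div_neg, tsum_poleTerm_neg] at hneg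
  rw [besselK2d, mul_comm 2 (sin _), ← div_div]
  linear_combination (hpos + hneg) / 2

theorem exp_neg_mul_mul_exp_neg_div_le {a b u : ℝ} (hb : 0 ≤ b) (hab : b ≤ a) (hu : 0 < u) :
    Real.exp (-a * u) * Real.exp (-a / u) ≤ Real.exp (-2 * (a - b)) * Real.exp (-b * u) := by
  have hu_add_inv : 2 ≤ u + 1 / u := by
    rw [← sub_nonneg, show u + 1 / u - 2 = (u - 1) ^ 2 / u by field_simp; ring]
    positivity
  have hb_div : 0 ≤ b / u := by positivity
  rw [← Real.exp_add, ← Real.exp_add, Real.exp_le_exp]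
  calc -a * u + -a / u = -(a - b) * (u + 1 / u) + (-b * u - b / u) := by ring
    _ ≤ -(a - b) * 2 + -b * u :=
      add_le_add (mul_le_mul_of_nonpos_left hu_add_inv (by linarith)) (by linarith)
    _ = -2 * (a - b) + -b * u := by ring

theorem norm_macdonaldHalfIntegral_le {ν a : ℂ} {μ b : ℝ} (hμ : 0 < μ) (hν : ν.re ≤ μ)
    (hb : 0 < b) (hab : b ≤ a.re) :
    ‖macdonaldHalfIntegral ν a‖ ≤
      Real.exp (-2 * (a.re - b)) * ((1 / b) ^ μ * Real.Gamma μ) := by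
  have hint := integrableOn_rpow_mul_exp_neg_mul_Ioi_zero (s := μ - 1) (by linarith) hb
  calc ‖macdonaldHalfIntegral ν a‖
      ≤ ∫ u in Ioi (1 : ℝ), Real.exp (-2 * (a.re - b)) * (u ^ (μ - 1) * Real.exp (-b * u)) := by
        refine norm_integral_le_of_norm_le
          ((hint.mono_set (Ioi_subset_Ioi zero_le_one)).const_mul _) ?_
        filter_upwards [self_mem_ae_restrict measurableSet_Ioi] with u (hu : 1 < u)
        have hu₀ : 0 < u := zero_lt_one.trans hu
        rw [norm_mul, norm_cpow_mul_exp_neg_mul _ _ hu₀, norm_exp, div_ofReal_re, neg_re, mul_assoc,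
          mul_left_comm (Real.exp (-2 * _)), sub_re, one_re]
        gcongr ?_ * ?_
        · exact Real.rpow_le_rpow_of_exponent_le hu.le (by linarith)
        · exact exp_neg_mul_mul_exp_neg_div_le hb.le hab hu₀
    _ ≤ Real.exp (-2 * (a.re - b)) * ∫ u in Ioi (0 : ℝ), u ^ (μ - 1) * Real.exp (-b * u) := by
        rw [integral_const_mul]
        gcongr _ * ?_
        refine setIntegral_mono_set hint ?_ (Ioi_subset_Ioi zero_le_one).eventuallyLE
        filter_upwards [self_mem_ae_restrict measurableSet_Ioi] with u (hu : 0 < u)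
        exact mul_nonneg (Real.rpow_nonneg hu.le _) (Real.exp_nonneg _)
    _ = Real.exp (-2 * (a.re - b)) * ((1 / b) ^ μ * Real.Gamma μ) := by
        rw [← Real.integral_rpow_mul_exp_neg_mul_Ioi hμ hb]
        simp only [neg_mul]

theorem exists_norm_besselK2d_le {m k : ℂ} (hm : m ∈ integerComplement) (hm_re : 0 < m.re)
    (hk : 0 < k.re) : ∃ C : ℝ, 0 ≤ C ∧ ∀ r : ℝ, 0 < r →
      ‖besselK2d m (k * r)‖ ≤ C * (min r 1 ^ (-m.re) * Real.exp (-(k.re * r))) := by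
  have := Real.Gamma_pos_of_pos hm_re
  refine ⟨Real.exp k.re * ((2 / k.re) ^ m.re * Real.Gamma m.re), by positivity, fun r hr ↦ ?_⟩
  have hmin : 0 < min r 1 := lt_min hr one_pos
  set b : ℝ := k.re / 2 * min r 1 with hb_def
  have hre : (k * (r / 2)).re = k.re / 2 * r := by
    rw [← ofReal_ofNat, ← ofReal_div, re_mul_ofReal]
    ring
  have half_le {ν : ℂ} (hν : ν.re ≤ m.re) := norm_macdonaldHalfIntegral_le (a := k * (r / 2))
    hm_re hν (b := b) (by positivity) (by rw [hre, hb_def]; gcongr; exact min_le_left r 1)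
  rw [show k * r = 2 * (k * (r / 2)) by ring, besselK2d_two_mul hm (by rw [hre]; positivity)]
  calc ‖(macdonaldHalfIntegral m (k * (r / 2)) + macdonaldHalfIntegral (-m) (k * (r / 2))) / 2‖
      ≤ Real.exp (-2 * ((k * (r / 2)).re - b)) * ((1 / b) ^ m.re * Real.Gamma m.re) := by
        rw [norm_div, norm_ofNat, div_le_iff₀ two_pos, mul_two]
        exact (norm_add_le _ _).trans (add_le_add (half_le le_rfl)
          (half_le (by rw [neg_re]; linarith)))
    _ ≤ Real.exp (k.re - k.re * r) * ((1 / b) ^ m.re * Real.Gamma m.re) := by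
        have hmin_le := mul_le_mul_of_nonneg_left (min_le_right r 1) hk.le
        gcongr
        rw [hre]
        linarith
    _ = _ := by
        rw [show 1 / b = 2 / k.re * (min r 1)⁻¹ by rw [hb_def]; field_simp,
          Real.mul_rpow (by positivity) (by positivity), Real.inv_rpow hmin.le,
          ← Real.rpow_neg hmin.le, sub_eq_add_neg, Real.exp_add]
        ring

end Macdonald

section Poisson

theorem rpow_le_div_rpow_mul_exp {ρ c x : ℝ} (hρ : 0 ≤ ρ) (hc : 0 < c) (hx : 0 ≤ x) :
    x ^ ρ ≤ (ρ / c) ^ ρ * Real.exp (c * x) := by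
  obtain rfl | hρ_pos := hρ.eq_or_lt
  · simpa only [Real.rpow_zero, one_mul] using Real.one_le_exp (by positivity)
  have hx_le : x ≤ ρ / c * Real.exp (c * x / ρ) := calc
    x = ρ / c * (c * x / ρ) := by field_simp
    _ ≤ ρ / c * Real.exp (c * x / ρ) := by
      gcongr
      linarith [Real.add_one_le_exp (c * x / ρ)]
  calc x ^ ρ ≤ (ρ / c * Real.exp (c * x / ρ)) ^ ρ := by gcongr
    _ = (ρ / c) ^ ρ * Real.exp (c * x) := by
      rw [Real.mul_rpow (by positivity) (by positivity), ← Real.exp_mul,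
        div_mul_cancel₀ _ hρ_pos.ne']

theorem norm_cosh_le_exp_abs_re (w : ℂ) : ‖cosh w‖ ≤ Real.exp |w.re| := by
  rw [cosh, norm_div, norm_ofNat, div_le_iff₀ two_pos, mul_two]
  refine (norm_add_le _ _).trans (add_le_add ?_ ?_)
  · rw [norm_exp]
    exact Real.exp_le_exp.2 (le_abs_self _)
  · rw [norm_exp, neg_re]
    exact Real.exp_le_exp.2 (neg_le_abs _)

theorem integrableOn_cpow_mul_one_sub_cpow {s t : ℂ} (hs : 0 < s.re) (ht : 0 < t.re) :
    IntegrableOn (fun u : ℝ ↦ (u : ℂ) ^ (s - 1) * (1 - u : ℂ) ^ (t - 1)) (Ioo 0 1) := by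
  rw [← intervalIntegrable_iff_integrableOn_Ioo_of_le zero_le_one]
  exact betaIntegral_convergent hs ht

theorem norm_cpow_mul_one_sub_cpow (s t : ℂ) {u : ℝ} (hu : u ∈ Ioo 0 1) :
    ‖(u : ℂ) ^ s * (1 - u : ℂ) ^ t‖ = u ^ s.re * (1 - u) ^ t.re := by
  have hsub : (1 - u : ℂ) = (1 - u : ℝ) := by norm_cast
  rw [norm_mul, norm_cpow_eq_rpow_re_of_pos hu.1, hsub,
    norm_cpow_eq_rpow_re_of_pos (sub_pos.2 hu.2)]

theorem integrableOn_rpow_mul_one_sub_rpow {s t : ℝ} (hs : 0 < s) (ht : 0 < t) :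
    IntegrableOn (fun u : ℝ ↦ u ^ (s - 1) * (1 - u) ^ (t - 1)) (Ioo 0 1) := by
  have hcomplex : IntegrableOn
      (fun u : ℝ ↦ (u : ℂ) ^ (s - 1 : ℂ) * (1 - u : ℂ) ^ (t - 1 : ℂ)) (Ioo 0 1) :=
    integrableOn_cpow_mul_one_sub_cpow (by rwa [ofReal_re]) (by rwa [ofReal_re])
  refine IntegrableOn.congr_fun hcomplex.norm (fun u hu ↦ ?_) measurableSet_Ioo
  simp only [norm_cpow_mul_one_sub_cpow _ _ hu, sub_re, ofReal_re, one_re]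

/-- Poisson's integral `∫₀¹ cosh(z√u) u^{-1/2} (1-u)^{m-1/2} du` for `I_m(z)`, without the factor
`(z/2)^m / (√π Γ(m+1/2))`. -/
noncomputable def besselPoissonIntegral (m z : ℂ) : ℂ :=
  ∫ u in Ioo (0 : ℝ) 1,
    cosh (z * √u) * ((u : ℂ) ^ (1 / 2 - 1 : ℂ) * (1 - u : ℂ) ^ (m + 1 / 2 - 1))

theorem hasSum_besselPoissonIntegral {m : ℂ} (z : ℂ) (hm : -(1 / 2) < m.re) :
    HasSum (fun n : ℕ ↦
        z ^ (2 * n) / ((2 * n).factorial : ℂ) * betaIntegral (n + 1 / 2) (m + 1 / 2))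
      (besselPoissonIntegral m z) := by
  have hcosh : ∀ᵐ u : ℝ ∂volume.restrict (Ioo 0 1), HasSum
      (fun n : ℕ ↦ z ^ (2 * n) / ((2 * n).factorial : ℂ) * (u : ℂ) ^ n) (cosh (z * √u)) := by
    filter_upwards [self_mem_ae_restrict measurableSet_Ioo] with u hu
    refine (hasSum_cosh (z * √u)).congr_fun fun n ↦ ?_
    rw [mul_pow, pow_mul (√u : ℂ), ← ofReal_pow √u, Real.sq_sqrt hu.1.le, div_mul_eq_mul_div]
  have moment (n : ℕ) : ∫ u in Ioo (0 : ℝ) 1,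
      (u : ℂ) ^ n * ((u : ℂ) ^ (1 / 2 - 1 : ℂ) * (1 - u : ℂ) ^ (m + 1 / 2 - 1))
        = betaIntegral (n + 1 / 2) (m + 1 / 2) := by
    rw [betaIntegral, intervalIntegral.integral_of_le zero_le_one, integral_Ioc_eq_integral_Ioo]
    refine setIntegral_congr_fun measurableSet_Ioo fun u hu ↦ ?_
    rw [add_sub_assoc (n : ℂ), cpow_add _ _ (ofReal_ne_zero.2 hu.1.ne'), cpow_natCast,
      mul_assoc]
  have hφ := integrableOn_cpow_mul_one_sub_cpow (s := 1 / 2) (t := m + 1 / 2) (by norm_num)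
    (by norm_num; linarith)
  have hsum := hasSum_mul_integral_of_norm_le_one (hasSum_cosh z).summable.norm
    (fun n ↦ by fun_prop) (fun n ↦ ?_) hφ hcosh
  · simpa only [moment, besselPoissonIntegral] using hsum
  · filter_upwards [self_mem_ae_restrict measurableSet_Ioo] with u hu
    rw [norm_pow, norm_real, Real.norm_of_nonneg hu.1.le]
    exact pow_le_one₀ hu.1.le hu.2.le

theorem Gamma_natCast_add_half (n : ℕ) :
    Gamma (n + 1 / 2) = (2 * n).factorial * √Real.pi / (n.factorial * 4 ^ n) := by
  have hdup := Gamma_mul_Gamma_add_half (n + 1 / 2)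
  rw [show (n : ℂ) + 1 / 2 + 1 / 2 = n + 1 by ring, Gamma_nat_eq_factorial,
    show 2 * ((n : ℂ) + 1 / 2) = (2 * n : ℕ) + 1 by push_cast; ring, Gamma_nat_eq_factorial,
    sub_add_cancel_right, cpow_neg, cpow_natCast, pow_mul] at hdup
  have hfact : (n.factorial : ℂ) ≠ 0 := Nat.cast_ne_zero.2 n.factorial_ne_zero
  rw [← div_div, eq_div_iff (by simp), eq_div_iff hfact, mul_right_comm, hdup]
  norm_num
  field_simp

theorem zeroF1reg_eq_besselPoissonIntegral {m : ℂ} (z : ℂ) (hm : -(1 / 2) < m.re) :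
    zeroF1reg (m + 1) (z ^ 2 / 4) =
      besselPoissonIntegral m z / (√Real.pi * Gamma (m + 1 / 2)) := by
  have hm_half : 0 < (m + 1 / 2).re := by
    norm_num
    linarith
  have hΓ := Gamma_ne_zero_of_re_pos hm_half
  have hpi : (√Real.pi : ℂ) ≠ 0 := ofReal_ne_zero.2 (Real.sqrt_pos.2 Real.pi_pos).ne'
  rw [eq_div_iff (mul_ne_zero hpi hΓ), ← (hasSum_besselPoissonIntegral z hm).tsum_eq, zeroF1reg,
    ← tsum_mul_right]
  refine tsum_congr fun n ↦ ?_
  have hn_half : 0 < ((n : ℂ) + 1 / 2).re := by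
    norm_num
    positivity
  have hadd : (n : ℂ) + 1 / 2 + (m + 1 / 2) = m + 1 + n := by ring
  have hΓn : Gamma (m + 1 + n) ≠ 0 := by
    rw [← hadd]
    exact Gamma_ne_zero_of_re_pos (by rw [add_re]; positivity)
  have hbeta := Gamma_mul_Gamma_eq_betaIntegral hn_half hm_half
  rw [hadd, Gamma_natCast_add_half, mul_comm (Gamma _), ← div_eq_iff hΓn] at hbeta
  have hfact : (n.factorial : ℂ) ≠ 0 := Nat.cast_ne_zero.2 n.factorial_ne_zero
  have hfact₂ : ((2 * n).factorial : ℂ) ≠ 0 := Nat.cast_ne_zero.2 (2 * n).factorial_ne_zero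
  rw [← hbeta, div_pow, ← pow_mul]
  field_simp

theorem rpow_mul_exp_mul_sqrt_le {ρ x u : ℝ} (hρ : 0 ≤ ρ) (hx : 0 ≤ x) (hu : u ∈ Ioo 0 1) :
    x ^ ρ * Real.exp (x * √u) ≤ (2 * ρ) ^ ρ * Real.exp x * (1 - u) ^ (-ρ) := by
  have hu_sub : 0 < 1 - u := sub_pos.2 hu.2
  have hsqrt : √u ≤ 1 - 1 / 2 * (1 - u) :=
    (Real.sqrt_le_left (by linarith [hu.1])).2 (by nlinarith [sq_nonneg (1 - u)])
  have hpow := rpow_le_div_rpow_mul_exp hρ one_half_pos (mul_nonneg hx hu_sub.le)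
  rw [Real.mul_rpow hx hu_sub.le, ← le_div_iff₀ (by positivity)] at hpow
  calc x ^ ρ * Real.exp (x * √u)
      ≤ (ρ / (1 / 2)) ^ ρ * Real.exp (1 / 2 * (x * (1 - u))) / (1 - u) ^ ρ *
          Real.exp (x * (1 - 1 / 2 * (1 - u))) := by gcongr
    _ = (2 * ρ) ^ ρ * (Real.exp (1 / 2 * (x * (1 - u))) * Real.exp (x * (1 - 1 / 2 * (1 - u)))) *
          (1 - u) ^ (-ρ) := by
        rw [Real.rpow_neg hu_sub.le, show ρ / (1 / 2) = 2 * ρ by ring]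
        ring
    _ = (2 * ρ) ^ ρ * Real.exp x * (1 - u) ^ (-ρ) := by
        rw [← Real.exp_add]
        ring_nf

theorem rpow_mul_norm_besselPoissonIntegral_le {m z : ℂ} {ρ : ℝ} (hρ : 0 ≤ ρ)
    (hm : ρ < m.re + 1 / 2) (hz : 0 ≤ z.re) :
    z.re ^ ρ * ‖besselPoissonIntegral m z‖ ≤ (2 * ρ) ^ ρ * Real.exp z.re *
      ∫ u in Ioo (0 : ℝ) 1, u ^ (1 / 2 - 1 : ℝ) * (1 - u) ^ (m.re + 1 / 2 - ρ - 1) := by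
  have hint := integrableOn_rpow_mul_one_sub_rpow one_half_pos (sub_pos.2 hm)
  rw [← integral_const_mul, ← Real.norm_of_nonneg (Real.rpow_nonneg hz ρ), ← norm_smul,
    besselPoissonIntegral, ← integral_smul]
  refine norm_integral_le_of_norm_le (hint.const_mul _) ?_
  filter_upwards [self_mem_ae_restrict measurableSet_Ioo] with u hu
  have hu_sub : 0 < 1 - u := sub_pos.2 hu.2
  have hu_pos : 0 < u := hu.1
  have hcosh : ‖cosh (z * √u)‖ ≤ Real.exp (z.re * √u) := by
    simpa only [re_mul_ofReal, abs_of_nonneg (mul_nonneg hz (Real.sqrt_nonneg u))] using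
      norm_cosh_le_exp_abs_re (z * √u)
  rw [norm_smul, norm_mul, norm_cpow_mul_one_sub_cpow _ _ hu,
    Real.norm_of_nonneg (Real.rpow_nonneg hz ρ)]
  have hre : (1 / 2 - 1 : ℂ).re = 1 / 2 - 1 ∧ (m + 1 / 2 - 1).re = m.re + 1 / 2 - 1 := by norm_num
  rw [hre.1, hre.2]
  calc z.re ^ ρ * (‖cosh (z * √u)‖ * (u ^ (1 / 2 - 1 : ℝ) * (1 - u) ^ (m.re + 1 / 2 - 1)))
      ≤ z.re ^ ρ * (Real.exp (z.re * √u) *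
          (u ^ (1 / 2 - 1 : ℝ) * (1 - u) ^ (m.re + 1 / 2 - 1))) := by gcongr
    _ = z.re ^ ρ * Real.exp (z.re * √u) *
          (u ^ (1 / 2 - 1 : ℝ) * (1 - u) ^ (m.re + 1 / 2 - 1)) := by ring
    _ ≤ (2 * ρ) ^ ρ * Real.exp z.re * (1 - u) ^ (-ρ) *
          (u ^ (1 / 2 - 1 : ℝ) * (1 - u) ^ (m.re + 1 / 2 - 1)) := by
        gcongr ?_ * _
        exact rpow_mul_exp_mul_sqrt_le hρ hz hu
    _ = (2 * ρ) ^ ρ * Real.exp z.re *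
          (u ^ (1 / 2 - 1 : ℝ) * (1 - u) ^ (m.re + 1 / 2 - ρ - 1)) := by
        rw [show m.re + 1 / 2 - ρ - 1 = -ρ + (m.re + 1 / 2 - 1) by ring, Real.rpow_add hu_sub]
        ring

theorem exists_norm_besselI2d_le_rpow_mul {m k : ℂ} (hm : -(1 / 2) < m.re) :
    ∃ A : ℝ, 0 ≤ A ∧ ∀ r : ℝ, 0 < r →
      ‖besselI2d m (k * r)‖ ≤ A * (r ^ m.re * ‖besselPoissonIntegral m (k * r)‖) := by
  refine ⟨‖k / 2‖ ^ m.re / Real.exp ((k / 2).arg * m.im) / ‖√Real.pi * Gamma (m + 1 / 2)‖,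
    by positivity, fun r hr ↦ ?_⟩
  have hpow := norm_cpow_le (k / 2 * r) m
  rw [arg_mul_real hr, norm_mul, norm_real, Real.norm_of_nonneg hr.le,
    Real.mul_rpow (norm_nonneg _) hr.le] at hpow
  rw [besselI2d, zeroF1reg_eq_besselPoissonIntegral _ hm, mul_div_right_comm, norm_mul, norm_div]
  calc _ ≤ ‖k / 2‖ ^ m.re * r ^ m.re / Real.exp ((k / 2).arg * m.im) *
        (‖besselPoissonIntegral m (k * r)‖ / ‖√Real.pi * Gamma (m + 1 / 2)‖) := by gcongr
    _ = _ := by ring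

theorem exists_norm_besselI2d_le {m k : ℂ} (hm : 0 < m.re) (hk : 0 < k.re) :
    ∃ C : ℝ, 0 ≤ C ∧ ∀ r : ℝ, 0 < r →
      ‖besselI2d m (k * r)‖ ≤ C * (min r 1 ^ m.re * Real.exp (k.re * r)) := by
  obtain ⟨A, hA, hI⟩ := exists_norm_besselI2d_le_rpow_mul (m := m) (k := k) (by linarith)
  have poisson_le {ρ : ℝ} (hρ : 0 ≤ ρ) (hρm : ρ ≤ m.re) : ∃ B : ℝ, ∀ r : ℝ, 0 < r →
      r ^ ρ * ‖besselPoissonIntegral m (k * r)‖ ≤ B * Real.exp (k.re * r) := by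
    refine ⟨(2 * ρ) ^ ρ * (∫ u in Ioo (0 : ℝ) 1, u ^ (1 / 2 - 1 : ℝ) *
      (1 - u) ^ (m.re + 1 / 2 - ρ - 1)) / k.re ^ ρ, fun r hr ↦ ?_⟩
    have hle := rpow_mul_norm_besselPoissonIntegral_le (m := m) (z := k * r) hρ (by linarith)
      (by rw [re_mul_ofReal]; positivity)
    rw [re_mul_ofReal, Real.mul_rpow hk.le hr.le, mul_assoc, ← le_div_iff₀' (by positivity)] at hle
    exact hle.trans_eq (by ring)
  obtain ⟨B₀, hB₀⟩ := poisson_le le_rfl hm.le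
  obtain ⟨B₁, hB₁⟩ := poisson_le hm.le le_rfl
  have hB₀_le : B₀ ≤ max (max B₀ B₁) 0 := (le_max_left _ _).trans (le_max_left _ _)
  have hB₁_le : B₁ ≤ max (max B₀ B₁) 0 := (le_max_right _ _).trans (le_max_left _ _)
  refine ⟨A * max (max B₀ B₁) 0, by positivity, fun r hr ↦ (hI r hr).trans ?_⟩
  rw [mul_assoc]
  gcongr A * ?_
  obtain hr_le | hr_ge := le_total r 1
  · have hle := hB₀ r hr
    rw [Real.rpow_zero, one_mul] at hle
    rw [min_eq_left hr_le, mul_left_comm]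
    gcongr
    exact hle.trans (by gcongr)
  · rw [min_eq_right hr_ge, Real.one_rpow, one_mul]
    exact (hB₁ r hr).trans (by gcongr)

end Poisson

section Kernel

theorem integrable_exp_neg_mul_abs {a : ℝ} (ha : 0 < a) :
    Integrable fun t : ℝ ↦ Real.exp (-a * |t|) := by
  rw [← integrableOn_univ, ← Iic_union_Ioi (a := (0 : ℝ)), integrableOn_union]
  constructor
  · refine (integrableOn_exp_mul_Iic ha 0).congr_fun (fun t (ht : t ≤ 0) ↦ ?_) measurableSet_Iic
    simp only [abs_of_nonpos ht, mul_neg, neg_mul, neg_neg]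
  · refine (integrableOn_exp_mul_Ioi (neg_lt_zero.2 ha) 0).congr_fun
      (fun t (ht : 0 < t) ↦ ?_) measurableSet_Ioi
    simp only [abs_of_pos ht]

theorem min_exp_one_rpow (s μ : ℝ) : min (Real.exp s) 1 ^ μ = Real.exp (μ * min s 0) := by
  rw [← Real.exp_zero, ← Real.exp_monotone.map_min, ← Real.exp_mul, mul_comm]

theorem max_zero_sub_max_zero_le_exp_sub_exp {s t : ℝ} (hst : s ≤ t) :
    max t 0 - max s 0 ≤ Real.exp t - Real.exp s := by
  have hdiff : 0 ≤ max t 0 - max s 0 := sub_nonneg.2 (max_le_max_right 0 hst)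
  have hexp_max (x : ℝ) : Real.exp (max x 0) = max (Real.exp x) 1 := by
    rw [Real.exp_monotone.map_max, Real.exp_zero]
  calc max t 0 - max s 0
      ≤ Real.exp (max s 0) * (max t 0 - max s 0) :=
        le_mul_of_one_le_left hdiff (Real.one_le_exp (le_max_right s 0))
    _ ≤ Real.exp (max s 0) * (Real.exp (max t 0 - max s 0) - 1) := by
        gcongr _ * ?_
        exact le_sub_iff_add_le.2 (Real.add_one_le_exp _)
    _ = max (Real.exp t) 1 - max (Real.exp s) 1 := by
        rw [mul_sub_one, ← Real.exp_add, add_sub_cancel, hexp_max, hexp_max]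
    _ ≤ Real.exp t - Real.exp s := by
        have := Real.exp_le_exp.2 hst
        grind

theorem mul_sub_min_zero_add_mul_sub_exp_le {μ κ s t : ℝ} (hst : s ≤ t) (hκ : 0 ≤ κ) :
    μ * (min s 0 - min t 0) + κ * (Real.exp s - Real.exp t) ≤ -min μ κ * (t - s) := by
  have hmin : 0 ≤ min t 0 - min s 0 := sub_nonneg.2 (min_le_min_right 0 hst)
  have hμ_le := mul_le_mul_of_nonneg_right (min_le_left μ κ) hmin
  have hmax : 0 ≤ max t 0 - max s 0 := sub_nonneg.2 (max_le_max_right 0 hst)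
  have hκ_le := mul_le_mul (min_le_right μ κ) (max_zero_sub_max_zero_le_exp_sub_exp hst) hmax hκ
  have hsplit : t - s = (min t 0 - min s 0) + (max t 0 - max s 0) := by
    linarith [min_add_max s 0, min_add_max t 0]
  rw [hsplit]
  linarith

theorem exists_norm_besselI2d_mul_besselK2d_le {m k : ℂ} (hm : m ∈ integerComplement)
    (hm_re : 0 < m.re) (hk : 0 < k.re) : ∃ C a : ℝ, 0 ≤ C ∧ 0 < a ∧ ∀ x y : ℝ,
      ‖besselI2d m (k * Real.exp (min x y)) * besselK2d m (k * Real.exp (max x y))‖ ≤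
        C * Real.exp (-a * |x - y|) := by
  obtain ⟨A, hA, hI⟩ := exists_norm_besselI2d_le hm_re hk
  obtain ⟨B, hB, hK⟩ := exists_norm_besselK2d_le hm hm_re hk
  refine ⟨A * B, min m.re k.re, by positivity, lt_min hm_re hk, fun x y ↦ ?_⟩
  rw [← max_sub_min_eq_abs', norm_mul]
  set s := min x y
  set t := max x y
  calc ‖besselI2d m (k * Real.exp s)‖ * ‖besselK2d m (k * Real.exp t)‖
      ≤ A * (min (Real.exp s) 1 ^ m.re * Real.exp (k.re * Real.exp s)) *
          (B * (min (Real.exp t) 1 ^ (-m.re) * Real.exp (-(k.re * Real.exp t)))) :=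
        mul_le_mul (hI _ (Real.exp_pos s)) (hK _ (Real.exp_pos t)) (norm_nonneg _) (by positivity)
    _ = A * B * Real.exp (m.re * (min s 0 - min t 0) + k.re * (Real.exp s - Real.exp t)) := by
        rw [min_exp_one_rpow, min_exp_one_rpow, mul_mul_mul_comm, ← Real.exp_add, ← Real.exp_add,
          ← Real.exp_add]
        ring_nf
    _ ≤ A * B * Real.exp (-min m.re k.re * (t - s)) := by
        gcongr
        exact mul_sub_min_zero_add_mul_sub_exp_le min_le_max hk.le

end Kernel

/-- the resolvent kernel `R(x,y) = I_m(k e^{min(x,y)}) K_m(k e^{max(x,y)})`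
of the Schrödinger operator with exponential potential defines a bounded integral operator
on `L²(ℝ)`, for `m ∉ ℤ`, `Re m > 0`, `Re k > 0`. -/
theorem exp_potential_resolvent_bounded (m k : ℂ) (hm : ∀ n : ℤ, m ≠ (n : ℂ))
    (hmre : 0 < m.re) (hk : 0 < k.re)
    (R : ℝ → ℝ → ℂ)
    (hR : ∀ x y : ℝ, R x y =
      besselI2d m (k * Real.exp (min x y)) * besselK2d m (k * Real.exp (max x y))) :
    ∃ C : ℝ, 0 ≤ C ∧ ∀ f g : ℝ → ℂ,
      MemLp f 2 (volume : Measure ℝ) → MemLp g 2 (volume : Measure ℝ) →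
      (∫ x : ℝ, ∫ y : ℝ, ‖f x‖ * ‖R x y‖ * ‖g y‖) ≤
        C * (eLpNorm f 2 (volume : Measure ℝ)).toReal *
          (eLpNorm g 2 (volume : Measure ℝ)).toReal := by
  have hm' : m ∈ integerComplement := fun ⟨n, hn⟩ ↦ hm n hn.symm
  obtain ⟨C, a, hC, ha, hbound⟩ := exists_norm_besselI2d_mul_besselK2d_le hm' hmre hk
  have hR_le (x y : ℝ) : ‖R x y‖ ≤ C * Real.exp (-a * |x - y|) := hR x y ▸ hbound x y
  exact ⟨∫ t, C * Real.exp (-a * |t|), integral_nonneg fun t ↦ by positivity, fun f g hf hg ↦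
    integral_integral_norm_mul_norm_mul_norm_le hR_le
      ((integrable_exp_neg_mul_abs ha).const_mul C) hf hg⟩
end

section
/- For all β, m ∈ ℂ and all r > 0, the Wronskian of the two 1d Whittaker functions satisfies W(𝓘_{β,m}, 𝓘_{β,−m})(r) = 𝓘_{β,m}(r)·𝓘_{β,−m}'(r) − 𝓘_{β,m}'(r)·𝓘_{β,−m}(r) = −sin(2πm)/π. -/
open Complex

/-- Olver-normalized confluent hypergeometric function
`₁𝐅₁(a; c; w) = ∑ (a)ₙ wⁿ/(n! Γ(c+n))`. -/
noncomputable def oneF1reg (a c w : ℂ) : ℂ :=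
  ∑' n : ℕ, (ascPochhammer ℂ n).eval a * w ^ n / ((n.factorial : ℂ) * Complex.Gamma (c + n))

/-- 1d Whittaker function `𝓘_{β,m}(z) = z^{1/2+m} e^{-z/2} ₁𝐅₁(1/2+m-β; 1+2m; z)`
(principal branch powers). -/
noncomputable def whittI (β m z : ℂ) : ℂ :=
  z ^ ((1 : ℂ) / 2 + m) * Complex.exp (-z / 2) * oneF1reg (1 / 2 + m - β) (1 + 2 * m) z

/-!
Kummer's equation `z F'' + (c - z) F' = a F` follows from three identities between contiguous
functions. By this equation, for `F = ₁𝐅₁(a; c; ·)` and `G = ₁𝐅₁(a - c + 1; 2 - c; ·)` the entire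
function `e^{-z} (z W(F, G) + (1 - c) F G)` has derivative zero, so it equals its value
`(1 - c) / (Γ(c) Γ(2 - c)) = sin(πc) / π` at `0`. For `c = 1 + 2m` it is the Wronskian of the
Whittaker functions, the prefactors contributing `e^{-z}` and the powers of `z`.
-/

open Filter Topology

section WronskianCalculus

variable {𝕜 A : Type*} [NontriviallyNormedField 𝕜] [NormedCommRing A] [NormedAlgebra 𝕜 A]

/-- The Wronskian `W(f, g) = f g' - f' g` of two functions of one variable. -/
noncomputable def wronskian (f g : 𝕜 → A) (x : 𝕜) : A :=
  f x * deriv g x - deriv f x * g x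

lemma wronskian_mul {p q f g : 𝕜 → A} {x : 𝕜}
    (hp : DifferentiableAt 𝕜 p x) (hq : DifferentiableAt 𝕜 q x)
    (hf : DifferentiableAt 𝕜 f x) (hg : DifferentiableAt 𝕜 g x) :
    wronskian (p * f) (q * g) x =
      p x * q x * wronskian f g x + wronskian p q x * (f x * g x) := by
  simp only [wronskian, deriv_mul hp hf, deriv_mul hq hg, Pi.mul_apply]
  ring

lemma hasDerivAt_wronskian {f g : 𝕜 → A} {x : 𝕜}
    (hf : DifferentiableAt 𝕜 f x) (hg : DifferentiableAt 𝕜 g x)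
    (hf' : DifferentiableAt 𝕜 (deriv f) x) (hg' : DifferentiableAt 𝕜 (deriv g) x) :
    HasDerivAt (wronskian f g)
      (f x * deriv (deriv g) x - deriv (deriv f) x * g x) x := by
  refine ((hf.hasDerivAt.mul hg'.hasDerivAt).sub
    (hf'.hasDerivAt.mul hg.hasDerivAt)).congr_deriv ?_
  ring

lemma wronskian_comp_ofReal {f g : ℂ → ℂ} {x : ℝ}
    (hf : DifferentiableAt ℂ f x) (hg : DifferentiableAt ℂ g x) :
    wronskian (fun y : ℝ => f y) (fun y : ℝ => g y) x = wronskian f g x := by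
  simp only [wronskian, hf.hasDerivAt.comp_ofReal.deriv, hg.hasDerivAt.comp_ofReal.deriv]

end WronskianCalculus

section PowerSeries

lemma norm_mul_pow_le_norm_mul_pow {𝕜 : Type*} [NormedField 𝕜] {w z : 𝕜} (hzw : ‖z‖ ≤ ‖w‖)
    (a : 𝕜) (n : ℕ) : ‖a * z ^ n‖ ≤ ‖a * w ^ n‖ := by
  simp only [norm_mul, norm_pow]
  gcongr

variable {u : ℕ → ℂ} {w z : ℂ}

lemma differentiableAt_tsum_mul_pow (hu : Summable fun n => u n * w ^ n) (hz : ‖z‖ < ‖w‖) :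
    DifferentiableAt ℂ (fun x => ∑' n, u n * x ^ n) z := by
  have hdiff : DifferentiableOn ℂ (fun x => ∑' n, u n * x ^ n) (Metric.ball 0 ‖w‖) :=
    differentiableOn_tsum_of_summable_norm hu.norm (fun _ => by fun_prop) Metric.isOpen_ball
      fun n _ hx => norm_mul_pow_le_norm_mul_pow (mem_ball_zero_iff.mp hx).le (u n) n
  exact hdiff.differentiableAt (Metric.isOpen_ball.mem_nhds (mem_ball_zero_iff.mpr hz))

lemma hasSum_deriv_tsum_mul_pow (hu : Summable fun n => u n * w ^ n) (hz : ‖z‖ < ‖w‖) :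
    HasSum (fun n : ℕ => n * u n * z ^ (n - 1)) (deriv (fun x => ∑' n, u n * x ^ n) z) := by
  have hderiv (n : ℕ) : deriv (fun x => u n * x ^ n) z = n * u n * z ^ (n - 1) := by
    rw [deriv_const_mul_field, deriv_pow_field]
    ring
  simpa only [hderiv] using hasSum_deriv_of_summable_norm hu.norm (fun _ => by fun_prop)
    Metric.isOpen_ball
    (fun n _ hx => norm_mul_pow_le_norm_mul_pow (mem_ball_zero_iff.mp hx).le (u n) n)
    (mem_ball_zero_iff.mpr hz)

end PowerSeries

lemma ascPochhammer_eval_mul_add {R : Type*} [CommSemiring R] (n : ℕ) (a : R) :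
    (ascPochhammer R n).eval a * (a + n) = a * (ascPochhammer R n).eval (a + 1) := by
  rw [← ascPochhammer_succ_eval, ascPochhammer_succ_left]
  simp

/-- The `n`-th Taylor coefficient at `0` of the Olver-normalized confluent hypergeometric function
`oneF1reg a c`. At the poles of `Γ` Mathlib has `Γ = 0` and `1 / 0 = 0`, the value there of the
entire function `1 / Γ`. -/
noncomputable def oneF1regCoeff (a c : ℂ) (n : ℕ) : ℂ :=
  (ascPochhammer ℂ n).eval a / (n.factorial * Gamma (c + n))

namespace oneF1regCoeff

variable (a c : ℂ) (n : ℕ)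

lemma add_one_mul_succ :
    (n + 1) * oneF1regCoeff a c (n + 1) = a * oneF1regCoeff (a + 1) (c + 1) n := by
  have hn : (n : ℂ) + 1 ≠ 0 := n.cast_add_one_ne_zero
  have hfac : (n.factorial : ℂ) ≠ 0 := mod_cast n.factorial_ne_zero
  have hc : c + ((n + 1 : ℕ) : ℂ) = c + 1 + n := by push_cast; ring
  rw [oneF1regCoeff, oneF1regCoeff, hc, ascPochhammer_succ_eval, ascPochhammer_eval_mul_add,
    Nat.factorial_succ, Nat.cast_mul, Nat.cast_succ]
  field_simp

lemma add_mul_self_add_one_right :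
    (n + c) * oneF1regCoeff a (c + 1) n = oneF1regCoeff a c n := by
  have hΓ : (Gamma (c + n))⁻¹ = (c + n) * (Gamma (c + 1 + n))⁻¹ := by
    rw [one_div_Gamma_eq_self_mul_one_div_Gamma_add_one, add_right_comm]
  simp only [oneF1regCoeff, div_eq_mul_inv, mul_inv, hΓ]
  ring

lemma add_mul_self :
    (n + a) * oneF1regCoeff a c n = a * oneF1regCoeff (a + 1) c n := by
  rw [oneF1regCoeff, oneF1regCoeff, ← mul_div_assoc, ← mul_div_assoc,
    ← ascPochhammer_eval_mul_add, mul_comm, add_comm a]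

lemma succ_eq_of_add_ne_zero (hc : c + n ≠ 0) :
    oneF1regCoeff a c (n + 1) = (a + n) / (c + n) * (1 / (n + 1)) * oneF1regCoeff a c n := by
  have hn : (n : ℂ) + 1 ≠ 0 := n.cast_add_one_ne_zero
  field_simp
  linear_combination (c + n) * add_one_mul_succ a c n +
    a * add_mul_self_add_one_right (a + 1) c n - add_mul_self a c n

lemma summable_mul_pow (z : ℂ) : Summable fun n => oneF1regCoeff a c n * z ^ n := by
  have hratio : Tendsto (fun n : ℕ => (a + n) / (c + n) * (1 / ((n : ℂ) + 1)) * z) atTop (𝓝 0) := by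
    have hquot : Tendsto (fun n : ℕ => (a + n) / (c + n)) atTop (𝓝 1) := by
      simpa using tendsto_add_mul_div_add_mul_atTop_nhds a c (1 : ℂ) one_ne_zero
    simpa using (hquot.mul tendsto_one_div_add_atTop_nhds_zero_nat).mul_const z
  have hne : ∀ᶠ n : ℕ in atTop, c + n ≠ 0 := by
    have hcast : Tendsto (Nat.cast : ℕ → ℂ) atTop cofinite :=
      Nat.cofinite_eq_atTop ▸ Nat.cast_injective.tendsto_cofinite
    filter_upwards [hcast.eventually (eventually_cofinite_ne (-c))] with n hn h
    exact hn (eq_neg_of_add_eq_zero_right h)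
  refine summable_of_ratio_norm_eventually_le (r := 1 / 2) (by norm_num) ?_
  filter_upwards [hne, hratio.norm.eventually_le_const (by norm_num : ‖(0 : ℂ)‖ < 1 / 2)]
    with n hn hle
  calc ‖oneF1regCoeff a c (n + 1) * z ^ (n + 1)‖
      = ‖(a + n) / (c + n) * (1 / ((n : ℂ) + 1)) * z‖ * ‖oneF1regCoeff a c n * z ^ n‖ := by
        rw [succ_eq_of_add_ne_zero a c n hn, ← norm_mul, pow_succ]
        ring_nf
    _ ≤ 1 / 2 * ‖oneF1regCoeff a c n * z ^ n‖ := by gcongr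

end oneF1regCoeff

section ConfluentHypergeometric

variable (a c z : ℂ)

lemma oneF1reg_eq_tsum_coeff : oneF1reg a c = fun z => ∑' n, oneF1regCoeff a c n * z ^ n := by
  funext z
  exact tsum_congr fun n => mul_div_right_comm _ _ _

lemma hasSum_oneF1reg : HasSum (fun n => oneF1regCoeff a c n * z ^ n) (oneF1reg a c z) := by
  rw [oneF1reg_eq_tsum_coeff]
  exact (oneF1regCoeff.summable_mul_pow a c z).hasSum

lemma oneF1reg_zero : oneF1reg a c 0 = (Gamma c)⁻¹ := by
  rw [oneF1reg, tsum_eq_single 0 fun n hn => by simp [hn]]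
  simp

lemma differentiable_oneF1reg : Differentiable ℂ (oneF1reg a c) := fun z => by
  obtain ⟨w, hw⟩ := NormedField.exists_lt_norm ℂ ‖z‖
  rw [oneF1reg_eq_tsum_coeff]
  exact differentiableAt_tsum_mul_pow (oneF1regCoeff.summable_mul_pow a c w) hw

lemma hasSum_deriv_oneF1reg :
    HasSum (fun n : ℕ => n * oneF1regCoeff a c n * z ^ (n - 1)) (deriv (oneF1reg a c) z) := by
  obtain ⟨w, hw⟩ := NormedField.exists_lt_norm ℂ ‖z‖
  rw [oneF1reg_eq_tsum_coeff]
  exact hasSum_deriv_tsum_mul_pow (oneF1regCoeff.summable_mul_pow a c w) hw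

lemma deriv_oneF1reg : deriv (oneF1reg a c) = fun z => a * oneF1reg (a + 1) (c + 1) z := by
  funext z
  have hshift := (hasSum_nat_add_iff' 1).mpr (hasSum_deriv_oneF1reg a c z)
  simp only [Finset.sum_range_one, Nat.cast_zero, zero_mul, sub_zero, Nat.cast_succ,
    Nat.add_sub_cancel, oneF1regCoeff.add_one_mul_succ, mul_assoc] at hshift
  exact hshift.unique ((hasSum_oneF1reg (a + 1) (c + 1) z).mul_left a)

lemma hasSum_mul_deriv_add_mul_oneF1reg (s : ℂ) :
    HasSum (fun n : ℕ => (n + s) * oneF1regCoeff a c n * z ^ n)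
      (z * deriv (oneF1reg a c) z + s * oneF1reg a c z) := by
  refine (((hasSum_deriv_oneF1reg a c z).mul_left z).add
    ((hasSum_oneF1reg a c z).mul_left s)).congr_fun ?_
  rintro (_ | n)
  · simp
  · rw [Nat.add_sub_cancel]
    ring

lemma mul_deriv_add_mul_oneF1reg_left :
    z * deriv (oneF1reg a c) z + a * oneF1reg a c z = a * oneF1reg (a + 1) c z := by
  refine (hasSum_mul_deriv_add_mul_oneF1reg a c z a).unique ?_
  simpa only [oneF1regCoeff.add_mul_self, mul_assoc] using (hasSum_oneF1reg (a + 1) c z).mul_left a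

lemma mul_deriv_add_mul_oneF1reg_right :
    z * deriv (oneF1reg a (c + 1)) z + c * oneF1reg a (c + 1) z = oneF1reg a c z := by
  refine (hasSum_mul_deriv_add_mul_oneF1reg a (c + 1) z c).unique ?_
  simpa only [oneF1regCoeff.add_mul_self_add_one_right] using hasSum_oneF1reg a c z

lemma differentiable_deriv_oneF1reg : Differentiable ℂ (deriv (oneF1reg a c)) := by
  rw [deriv_oneF1reg]
  exact (differentiable_oneF1reg _ _).const_mul a

lemma kummer_equation_oneF1reg :
    z * deriv (deriv (oneF1reg a c)) z + (c - z) * deriv (oneF1reg a c) z =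
      a * oneF1reg a c z := by
  have hsecond : deriv (deriv (oneF1reg a c)) z = a * deriv (oneF1reg (a + 1) (c + 1)) z := by
    rw [deriv_oneF1reg, deriv_const_mul_field]
  have hfirst : deriv (oneF1reg a c) z = a * oneF1reg (a + 1) (c + 1) z := by
    rw [deriv_oneF1reg]
  linear_combination z * hsecond + c * hfirst +
    a * mul_deriv_add_mul_oneF1reg_right (a + 1) c z - mul_deriv_add_mul_oneF1reg_left a c z

end ConfluentHypergeometric

lemma one_sub_mul_inv_Gamma_mul_inv_Gamma_two_sub (c : ℂ) :
    (1 - c) * ((Gamma c)⁻¹ * (Gamma (2 - c))⁻¹) = sin (Real.pi * c) / Real.pi := by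
  have hΓ : (Gamma (1 - c))⁻¹ = (1 - c) * (Gamma (2 - c))⁻¹ := by
    rw [one_div_Gamma_eq_self_mul_one_div_Gamma_add_one]
    ring_nf
  rw [mul_left_comm, ← hΓ, ← mul_inv, Gamma_mul_Gamma_one_sub, inv_div]

-- `z ^ (1 - c) * oneF1reg (a - c + 1) (2 - c) z` is the second solution of Kummer's equation with
-- parameters `a`, `c`; the left side is `z ^ c * exp (-z)` times the Wronskian of the two.
lemma exp_neg_mul_wronskian_oneF1reg (a c z : ℂ) :
    exp (-z) * (z * wronskian (oneF1reg a c) (oneF1reg (a - c + 1) (2 - c)) z +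
      (1 - c) * (oneF1reg a c z * oneF1reg (a - c + 1) (2 - c) z)) =
    sin (Real.pi * c) / Real.pi := by
  set F := oneF1reg a c
  set G := oneF1reg (a - c + 1) (2 - c)
  have hF : Differentiable ℂ F := differentiable_oneF1reg _ _
  have hG : Differentiable ℂ G := differentiable_oneF1reg _ _
  have hderiv (x : ℂ) : HasDerivAt
      (fun x => exp (-x) * (x * wronskian F G x + (1 - c) * (F x * G x))) 0 x := by
    have hW := hasDerivAt_wronskian (hF x) (hG x)
      (differentiable_deriv_oneF1reg _ _ x) (differentiable_deriv_oneF1reg _ _ x)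
    refine ((hasDerivAt_neg x).cexp.mul (((hasDerivAt_id x).mul hW).add
      (((hF x).hasDerivAt.mul (hG x).hasDerivAt).const_mul (1 - c)))).congr_deriv ?_
    simp only [wronskian, id, Pi.mul_apply, Pi.add_apply]
    linear_combination exp (-x) * (F x * kummer_equation_oneF1reg (a - c + 1) (2 - c) x -
      G x * kummer_equation_oneF1reg a c x)
  calc exp (-z) * (z * wronskian F G z + (1 - c) * (F z * G z))
      = exp (-0) * (0 * wronskian F G 0 + (1 - c) * (F 0 * G 0)) :=
        is_const_of_deriv_eq_zero (fun x => (hderiv x).differentiableAt)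
          (fun x => (hderiv x).deriv) z 0
    _ = (1 - c) * ((Gamma c)⁻¹ * (Gamma (2 - c))⁻¹) := by simp [F, G, oneF1reg_zero]
    _ = sin (Real.pi * c) / Real.pi := one_sub_mul_inv_Gamma_mul_inv_Gamma_two_sub c

/-- The elementary factor `z ^ μ * exp (-z / 2)` that turns solutions of Kummer's equation into
Whittaker functions (with `μ = 1 / 2 + m`). -/
noncomputable def whittPrefactor (μ z : ℂ) : ℂ :=
  z ^ μ * exp (-z / 2)

lemma whittPrefactor_mul {z : ℂ} (hz : z ≠ 0) (μ ν : ℂ) :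
    whittPrefactor μ z * whittPrefactor ν z = z ^ (μ + ν) * exp (-z) := by
  rw [whittPrefactor, whittPrefactor, mul_mul_mul_comm, ← cpow_add _ _ hz, ← exp_add]
  ring_nf

section Whittaker

variable {z : ℂ} (hz : z ∈ slitPlane)
include hz

lemma hasDerivAt_whittPrefactor (μ : ℂ) :
    HasDerivAt (whittPrefactor μ) ((μ / z - 1 / 2) * whittPrefactor μ z) z := by
  refine (((hasDerivAt_id z).cpow_const hz).mul
    ((hasDerivAt_neg z).div_const 2).cexp).congr_deriv ?_
  simp only [id, whittPrefactor, cpow_sub _ _ (slitPlane_ne_zero hz), cpow_one]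
  ring

lemma wronskian_whittPrefactor (μ ν : ℂ) :
    wronskian (whittPrefactor μ) (whittPrefactor ν) z =
      (ν - μ) / z * (whittPrefactor μ z * whittPrefactor ν z) := by
  rw [wronskian, (hasDerivAt_whittPrefactor hz μ).deriv, (hasDerivAt_whittPrefactor hz ν).deriv]
  ring

lemma differentiableAt_whittI (β m : ℂ) : DifferentiableAt ℂ (whittI β m) z :=
  (hasDerivAt_whittPrefactor hz _).differentiableAt.mul (differentiable_oneF1reg _ _ z)

end Whittaker

theorem wronskian_whittI_general (β m : ℂ) {z : ℂ} (hz : z ∈ slitPlane) :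
    wronskian (whittI β m) (whittI β (-m)) z = -sin (2 * Real.pi * m) / Real.pi := by
  set p := whittPrefactor (1 / 2 + m)
  set q := whittPrefactor (1 / 2 + -m)
  set F := oneF1reg (1 / 2 + m - β) (1 + 2 * m)
  set G := oneF1reg (1 / 2 + -m - β) (1 + 2 * -m)
  have hpq : p z * q z = z * exp (-z) := by
    rw [whittPrefactor_mul (slitPlane_ne_zero hz), add_add_add_comm, add_neg_cancel, add_zero,
      add_halves, cpow_one]
  have hWpq : wronskian p q z = -2 * m * exp (-z) := by
    rw [wronskian_whittPrefactor hz, hpq]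
    field_simp [slitPlane_ne_zero hz]
    ring
  have hG : oneF1reg (1 / 2 + m - β - (1 + 2 * m) + 1) (2 - (1 + 2 * m)) = G := by
    congr 1 <;> ring
  have hkummer : exp (-z) * (z * wronskian F G z + (1 - (1 + 2 * m)) * (F z * G z)) =
      sin (Real.pi * (1 + 2 * m)) / Real.pi :=
    hG ▸ exp_neg_mul_wronskian_oneF1reg (1 / 2 + m - β) (1 + 2 * m) z
  calc wronskian (whittI β m) (whittI β (-m)) z
      = p z * q z * wronskian F G z + wronskian p q z * (F z * G z) :=
        wronskian_mul (hasDerivAt_whittPrefactor hz _).differentiableAt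
          (hasDerivAt_whittPrefactor hz _).differentiableAt
          (differentiable_oneF1reg _ _ z) (differentiable_oneF1reg _ _ z)
    _ = exp (-z) * (z * wronskian F G z + (1 - (1 + 2 * m)) * (F z * G z)) := by
        rw [hpq, hWpq]
        ring
    _ = sin (Real.pi * (1 + 2 * m)) / Real.pi := hkummer
    _ = -sin (2 * Real.pi * m) / Real.pi := by
        rw [← sin_add_pi]
        ring_nf

/-- for all `β, m ∈ ℂ` and `r > 0`,
`W(𝓘_{β,m}, 𝓘_{β,-m})(r) = -sin(2πm)/π`. -/
theorem wronskian_whittI (β m : ℂ) :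
    ∀ r : ℝ, 0 < r →
      whittI β m r * deriv (fun r : ℝ => whittI β (-m) r) r -
        deriv (fun r : ℝ => whittI β m r) r * whittI β (-m) r =
      -Complex.sin (2 * Real.pi * m) / (Real.pi : ℂ) := by
  intro r hr
  have hr : (r : ℂ) ∈ slitPlane := ofReal_mem_slitPlane.mpr hr
  rw [← wronskian_whittI_general β m hr]
  exact wronskian_comp_ofReal (differentiableAt_whittI hr β m) (differentiableAt_whittI hr β (-m))
end
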